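/- For every n ≥ 1, every k ≥ 2, and every J : Fin n → Fin n → ℝ, letting Z = Σ_{x ∈ {-1,1}^n} exp(Σ_{i,j} J i j · x i · x j), we have log Z ≤ sup over all SA(k)-consistent families (μ_S) of [ Σ_{i,j} J i j · E_{μ_{{i,j}}}[x i · x j] + min over S ⊆ Fin n, |S| ≤ k−1 of ( H(μ_S) + Σ_{i ∉ S} H(μ_i | μ_S) ) ]. In particular, every probability distribution on {-1,1}^n induces an SA(k)-consistent family via its marginals, and the relaxation value upper-bounds log Z. -/

import Mathlib

open scoped BigOperators

noncomputable section

/-- The set `{-1, 1}` of spin values. -/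
abbrev B : Finset ℝ := {-1, 1}

/-- The discrete cube `{-1,1}^n`. -/
abbrev Cube (n : ℕ) := Fin n → ↥B

/-- Assignments of spin values to the coordinates in `S`. -/
abbrev Asg {n : ℕ} (S : Finset (Fin n)) := ↥S → ↥B

/-- Shannon entropy (in nats), with the convention `0 * log 0 = 0`. -/
def ent {D : Type*} [Fintype D] (p : D → ℝ) : ℝ := -∑ d, p d * Real.log (p d)

/-- Restriction of an assignment on `S` to a subset `R ⊆ S`. -/
def res {n : ℕ} {R S : Finset (Fin n)} (h : R ⊆ S) (y : Asg S) : Asg R :=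
  fun i => y ⟨i.1, h i.2⟩

/-- The marginal on `R ⊆ S` of a local distribution on assignments to `S`. -/
def margTo {n : ℕ} {S : Finset (Fin n)} (μ : Asg S → ℝ) {R : Finset (Fin n)}
    (h : R ⊆ S) (z : Asg R) : ℝ :=
  ∑ y : Asg S, if res h y = z then μ y else 0

/-- A level-`k` Sherali–Adams consistent family on `Fin n`: local distributions
`μ_S` over assignments to each `S ⊆ Fin n` with `|S| ≤ k`, nonnegative, summing
to `1`, and consistent on intersections whenever `|S ∪ T| ≤ k`. -/
structure SAFamily (n k : ℕ) where
  μ : (S : Finset (Fin n)) → Asg S → ℝ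
  nonneg : ∀ S : Finset (Fin n), S.card ≤ k → ∀ y : Asg S, 0 ≤ μ S y
  sum_one : ∀ S : Finset (Fin n), S.card ≤ k → ∑ y : Asg S, μ S y = 1
  consistent : ∀ S T : Finset (Fin n), (S ∪ T).card ≤ k → ∀ z : Asg (S ∩ T),
    margTo (μ S) Finset.inter_subset_left z = margTo (μ T) Finset.inter_subset_right z

/-- Extension of an assignment on `S` to `insert i S` with value `a` at `i`. -/
def extAsg {n : ℕ} {S : Finset (Fin n)} (i : Fin n) (y : Asg S) (a : ↥B) :
    Asg (insert i S) :=
  fun j => if h : j.1 = i then a else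
    y ⟨j.1, by
      rcases Finset.mem_insert.mp j.2 with h' | h'
      · exact absurd h' h
      · exact h'⟩

/-- The conditional entropy `H(μ_i | μ_S)` computed from the local distributions
`μ_{S∪{i}}` and `μ_S` of an SA family (terms with `μ_S(x_S) = 0` contribute `0`). -/
def condEnt {n k : ℕ} (F : SAFamily n k) (S : Finset (Fin n)) (i : Fin n) : ℝ :=
  ∑ y : Asg S, F.μ S y *
    ent (fun a : ↥B => F.μ (insert i S) (extAsg i y a) / F.μ S y)

/-- The pairwise correlation `E_{μ_{{i,j}}}[x_i x_j]` of an SA family. -/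
def pairExp {n k : ℕ} (F : SAFamily n k) (i j : Fin n) : ℝ :=
  ∑ y : Asg ({i, j} : Finset (Fin n)),
    F.μ {i, j} y * (y ⟨i, by simp⟩ : ℝ) * (y ⟨j, by simp⟩ : ℝ)

/-- The augmented mean-field pseudo-entropy of an SA family at level `k'`:
`min_{|S| ≤ k'} [ H(μ_S) + Σ_{i ∉ S} H(μ_i | μ_S) ]`. -/
def pseudoEnt {n k : ℕ} (F : SAFamily n k) (k' : ℕ) : ℝ :=
  (Finset.univ.filter (fun S : Finset (Fin n) => S.card ≤ k')).inf'
    ⟨∅, Finset.mem_filter.mpr ⟨Finset.mem_univ _, by simp⟩⟩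
    (fun S => ent (F.μ S) + ∑ i ∈ Sᶜ, condEnt F S i)

/-- The total interaction strength `J_T = Σ_{i,j} |J i j|`. -/
def JT {n : ℕ} (J : Fin n → Fin n → ℝ) : ℝ := ∑ i : Fin n, ∑ j : Fin n, |J i j|

/-- `E[x_i | x_S]`, computed from `μ_{S∪{i}}` and `μ_S`
(equal to `0` when `μ_S(x_S) = 0`, since `·/0 = 0` in `ℝ`). -/
def condExp1 {n k : ℕ} (F : SAFamily n k) (S : Finset (Fin n)) (y : Asg S) (i : Fin n) : ℝ :=
  (∑ z : Asg (S ∪ {i}), if res Finset.subset_union_left z = y then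
      F.μ (S ∪ {i}) z * (z ⟨i, by simp⟩ : ℝ) else 0) / F.μ S y

/-- `E[x_i x_j | x_S]`, computed from `μ_{S∪{i,j}}` and `μ_S`. -/
def condExp2 {n k : ℕ} (F : SAFamily n k) (S : Finset (Fin n)) (y : Asg S) (i j : Fin n) : ℝ :=
  (∑ z : Asg (S ∪ {i, j}), if res Finset.subset_union_left z = y then
      F.μ (S ∪ {i, j}) z * (z ⟨i, by simp⟩ : ℝ) * (z ⟨j, by simp⟩ : ℝ) else 0) / F.μ S y

/-- `Σ_{x_S} μ_S(x_S) ( E[x_i x_j | x_S] − E[x_i | x_S] E[x_j | x_S] )`: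
the average conditional covariance of coordinates `i, j` given `S`. -/
def condCov {n k : ℕ} (F : SAFamily n k) (S : Finset (Fin n)) (i j : Fin n) : ℝ :=
  ∑ y : Asg S, F.μ S y * (condExp2 F S y i j - condExp1 F S y i * condExp1 F S y j)

/-- Restriction of `x ∈ {-1,1}^n` to the coordinates in `S`. -/
def restr {n : ℕ} (S : Finset (Fin n)) (x : Cube n) : Asg S := fun i => x i.1

/-- Marginal distribution of `μ : {-1,1}^n → ℝ` on the coordinates in `S`. -/
def margS {n : ℕ} (μ : Cube n → ℝ) (S : Finset (Fin n)) (y : Asg S) : ℝ :=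
  ∑ x : Cube n, if restr S x = y then μ x else 0

theorem push_sum {α β : Type*} [Fintype α] [Fintype β] [DecidableEq β]
    (p : α → ℝ) (f : α → β) (φ : β → ℝ) :
    ∑ x, p x * φ (f x) = ∑ z, (∑ x, if f x = z then p x else 0) * φ z := by
  simp_rw [Finset.sum_mul]
  rw [Finset.sum_comm]
  refine Finset.sum_congr rfl fun x _ => ?_
  simp [ite_mul]

theorem margS_push {n : ℕ} (p : Cube n → ℝ) (S : Finset (Fin n)) (φ : Asg S → ℝ) :
    ∑ y, margS p S y * φ y = ∑ x, p x * φ (restr S x) :=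
  (push_sum p (restr S) φ).symm

theorem margTo_margS {n : ℕ} (p : Cube n → ℝ) {R S : Finset (Fin n)} (h : R ⊆ S) (z : Asg R) :
    margTo (margS p S) h z = margS p R z := by
  have := margS_push p S (fun y => if res h y = z then 1 else 0)
  simp only [mul_ite, mul_one, mul_zero] at this
  exact this

/-- The family of marginals of a distribution. -/
def margFam {n : ℕ} (k : ℕ) (p : Cube n → ℝ) (h0 : ∀ x, 0 ≤ p x) (h1 : ∑ x, p x = 1) :
    SAFamily n k where
  μ := margS p
  nonneg S _ y := Finset.sum_nonneg fun x _ => by split_ifs <;> simp [h0]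
  sum_one S _ := by
    have := margS_push p S (fun _ => 1)
    simpa [h1] using this
  consistent S T _ z := by rw [margTo_margS, margTo_margS]

theorem restr_insert_eq {n : ℕ} {S : Finset (Fin n)} {i : Fin n} (hi : i ∉ S) (x : Cube n)
    (y : Asg S) (a : ↥B) :
    restr (insert i S) x = extAsg i y a ↔ restr S x = y ∧ x i = a := by
  constructor
  · intro h
    constructor
    · funext j
      have hj : j.1 ≠ i := fun e => hi (e ▸ j.2)
      have := congrFun h ⟨j.1, Finset.mem_insert_of_mem j.2⟩
      simpa [restr, extAsg, hj] using this
    · have := congrFun h ⟨i, Finset.mem_insert_self i S⟩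
      simpa [restr, extAsg] using this
  · rintro ⟨rfl, rfl⟩
    funext j
    by_cases hj : j.1 = i
    · simp [restr, extAsg, hj]
    · simp [restr, extAsg, hj]

theorem margS_pos {n : ℕ} {p : Cube n → ℝ} (hp : ∀ x, 0 < p x) (S : Finset (Fin n)) (y : Asg S) :
    0 < margS p S y := by
  let x : Cube n := fun i => if h : i ∈ S then y ⟨i, h⟩ else ⟨1, by simp⟩
  have hx : restr S x = y := by
    funext j
    simp [restr, x]
  refine Finset.sum_pos' (fun x _ => by split_ifs <;> simp [(hp _).le]) ⟨x, Finset.mem_univ _, ?_⟩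
  simp [hx, hp]

theorem margS_insert_push {n : ℕ} (p : Cube n → ℝ) {S : Finset (Fin n)} {i : Fin n} (hi : i ∉ S)
    (φ : Asg S → ↥B → ℝ) :
    ∑ y, ∑ a, margS p (insert i S) (extAsg i y a) * φ y a = ∑ x, p x * φ (restr S x) (x i) := by
  have := push_sum p (fun x => (restr S x, x i)) (fun z => φ z.1 z.2)
  rw [Fintype.sum_prod_type] at this
  rw [this]
  refine Finset.sum_congr rfl fun y _ => Finset.sum_congr rfl fun a _ => ?_
  simp only [margS, restr_insert_eq hi, Prod.mk.injEq]

theorem margS_sum_ext {n : ℕ} (p : Cube n → ℝ) {S : Finset (Fin n)} {i : Fin n} (hi : i ∉ S)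
    (y : Asg S) : ∑ a, margS p (insert i S) (extAsg i y a) = margS p S y := by
  simp only [margS, restr_insert_eq hi]
  rw [Finset.sum_comm]
  refine Finset.sum_congr rfl fun x _ => ?_
  by_cases h : restr S x = y
  · simp only [h, true_and, if_true]
    rw [Finset.sum_ite_eq, if_pos (Finset.mem_univ _)]
  · simp only [h, false_and, if_false, Finset.sum_const_zero]

theorem gibbs_ineq {α : Type*} [Fintype α] (p q : α → ℝ) (hp : ∀ x, 0 < p x) (hq : ∀ x, 0 < q x)
    (h : ∑ x, q x ≤ ∑ x, p x) : ent p ≤ -∑ x, p x * Real.log (q x) := by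
  unfold ent
  have : ∑ x, (p x * Real.log (q x) - p x * Real.log (p x)) ≤ ∑ x, (q x - p x) := by
    refine Finset.sum_le_sum fun x _ => ?_
    have h1 := Real.log_le_sub_one_of_pos (div_pos (hq x) (hp x))
    rw [Real.log_div (hq x).ne' (hp x).ne'] at h1
    have h2 := mul_le_mul_of_nonneg_left h1 (hp x).le
    have h3 : p x * (q x / p x - 1) = q x - p x := by
      have := (hp x).ne'
      field_simp
    linarith
  simp only [Finset.sum_sub_distrib] at this
  linarith

theorem sum_prod_cond {n : ℕ} (S : Finset (Fin n)) (f : Asg S → ℝ)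
    (g : Fin n → Asg S → ↥B → ℝ) (hg : ∀ i ∉ S, ∀ y, ∑ a, g i y a = 1) :
    ∑ x : Cube n, f (restr S x) * ∏ i ∈ Sᶜ, g i (restr S x) (x i) = ∑ y, f y := by
  classical
  let h : Asg S → Fin n → ↥B → ℝ := fun y i a =>
    if hi : i ∈ S then (if a = y ⟨i, hi⟩ then 1 else 0) else g i y a
  have key : ∀ x : Cube n, f (restr S x) * ∏ i ∈ Sᶜ, g i (restr S x) (x i)
      = ∑ y, f y * ∏ i, h y i (x i) := by
    intro x
    rw [Finset.sum_eq_single (restr S x)]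
    · congr 1
      rw [← Finset.prod_mul_prod_compl S]
      rw [Finset.prod_eq_one (s := S), one_mul]
      · refine Finset.prod_congr rfl fun i hi => ?_
        have hi' : i ∉ S := by simpa using hi
        simp [h, hi']
      · intro i hi
        simp [h, hi, restr]
    · intro y _ hy
      obtain ⟨j, hj⟩ := Function.ne_iff.mp hy
      rw [Finset.prod_eq_zero (Finset.mem_univ j.1), mul_zero]
      have hj' : ¬ x j.1 = y j := fun e => hj e.symm
      simp [h, hj']
    · simp
  simp_rw [key]
  rw [Finset.sum_comm]
  refine Finset.sum_congr rfl fun y _ => ?_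
  rw [← Finset.mul_sum, ← Fintype.prod_sum, Finset.prod_eq_one, mul_one]
  intro i _
  by_cases hi : i ∈ S
  · simp only [h, hi, dif_pos]
    rw [Finset.sum_ite_eq', if_pos (Finset.mem_univ _)]
  · simp only [h, hi, dif_neg, not_false_eq_true]
    exact hg i hi y

theorem condEnt_margFam {n k : ℕ} (p : Cube n → ℝ) (hp : ∀ x, 0 < p x) (h1 : ∑ x, p x = 1)
    {S : Finset (Fin n)} {i : Fin n} (hi : i ∉ S) :
    condEnt (margFam k p (fun x => (hp x).le) h1) S i =
      -∑ x, p x * Real.log (margS p (insert i S) (extAsg i (restr S x) (x i)) /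
        margS p S (restr S x)) := by
  rw [← margS_insert_push p hi (fun y a => Real.log (margS p (insert i S) (extAsg i y a) /
        margS p S y)), ← Finset.sum_neg_distrib]
  unfold condEnt ent
  refine Finset.sum_congr rfl fun y _ => ?_
  simp only [margFam]
  rw [mul_neg, Finset.mul_sum]
  congr 1
  refine Finset.sum_congr rfl fun a _ => ?_
  have := (margS_pos hp S y).ne'
  rw [← mul_assoc, mul_div_cancel₀ _ this]

theorem ent_le_pseudo {n k : ℕ} (p : Cube n → ℝ) (hp : ∀ x, 0 < p x) (h1 : ∑ x, p x = 1)
    (S : Finset (Fin n)) :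
    ent p ≤ ent (margS p S) + ∑ i ∈ Sᶜ, condEnt (margFam k p (fun x => (hp x).le) h1) S i := by
  let g : Fin n → Asg S → ↥B → ℝ := fun i y a =>
    margS p (insert i S) (extAsg i y a) / margS p S y
  have gpos : ∀ i y a, 0 < g i y a := fun i y a => div_pos (margS_pos hp _ _) (margS_pos hp _ _)
  have hq := sum_prod_cond S (margS p S) g (fun i hi y => by
    simp only [g]
    rw [← Finset.sum_div, margS_sum_ext p hi, div_self (margS_pos hp S y).ne'])
  have hone : ∑ y, margS p S y = 1 := by
    have := margS_push p S (fun _ => 1)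
    simpa [h1] using this
  refine (gibbs_ineq p (fun x => margS p S (restr S x) * ∏ i ∈ Sᶜ, g i (restr S x) (x i)) hp
    (fun x => mul_pos (margS_pos hp _ _) (Finset.prod_pos fun i _ => gpos _ _ _))
    (by rw [hq, hone, h1])).trans (le_of_eq ?_)
  have e1 : ∀ x : Cube n, p x * Real.log (margS p S (restr S x) * ∏ i ∈ Sᶜ, g i (restr S x) (x i))
      = p x * Real.log (margS p S (restr S x)) +
        ∑ i ∈ Sᶜ, p x * Real.log (g i (restr S x) (x i)) := by
    intro x
    rw [Real.log_mul (margS_pos hp _ _).ne' (Finset.prod_pos fun i _ => gpos _ _ _).ne',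
      Real.log_prod (fun i _ => (gpos _ _ _).ne'), mul_add, Finset.mul_sum]
  simp_rw [e1]
  rw [Finset.sum_add_distrib, neg_add, Finset.sum_comm (t := Sᶜ), ← Finset.sum_neg_distrib (s := Sᶜ)]
  congr 1
  · rw [← margS_push p S (fun y => Real.log (margS p S y))]
    rfl
  · refine Finset.sum_congr rfl fun i hi => ?_
    rw [condEnt_margFam p hp h1 (by simpa using hi)]

theorem pairExp_margFam {n k : ℕ} (p : Cube n → ℝ) (h0 : ∀ x, 0 ≤ p x) (h1 : ∑ x, p x = 1)
    (i j : Fin n) :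
    pairExp (margFam k p h0 h1) i j = ∑ x, p x * ((x i : ℝ) * (x j : ℝ)) := by
  have := margS_push p {i, j} (fun y => (y ⟨i, by simp⟩ : ℝ) * (y ⟨j, by simp⟩ : ℝ))
  simp only [restr] at this
  rw [← this]
  unfold pairExp
  refine Finset.sum_congr rfl fun y _ => ?_
  rw [mul_assoc]
  rfl

theorem abs_spin (a : ↥B) : |(a : ℝ)| = 1 := by
  have := a.2
  simp only [B, Finset.mem_insert, Finset.mem_singleton] at this
  rcases this with h | h <;> simp [h]

theorem abs_pairExp_le {n k : ℕ} (hk : 2 ≤ k) (F : SAFamily n k) (i j : Fin n) :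
    |pairExp F i j| ≤ 1 := by
  have hc : ({i, j} : Finset (Fin n)).card ≤ k := Finset.card_le_two.trans hk
  rw [← F.sum_one {i, j} hc]
  refine (Finset.abs_sum_le_sum_abs _ _).trans (Finset.sum_le_sum fun y _ => ?_)
  rw [abs_mul, abs_mul, abs_spin, abs_spin, abs_of_nonneg (F.nonneg _ hc y)]
  simp

theorem ent_le_card {D : Type*} [Fintype D] (p : D → ℝ) (hp : ∀ d, 0 ≤ p d) :
    ent p ≤ Fintype.card D := by
  unfold ent
  rw [← Finset.sum_neg_distrib, ← Finset.card_univ, Finset.cast_card]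
  refine Finset.sum_le_sum fun d _ => ?_
  rcases (hp d).eq_or_lt with h | h
  · simp [← h]
  · have h2 := Real.one_sub_inv_le_log_of_pos h
    have h3 := mul_le_mul_of_nonneg_left h2 h.le
    rw [mul_sub, mul_inv_cancel₀ h.ne'] at h3
    linarith

theorem pseudoEnt_le {n k : ℕ} (hk : 2 ≤ k) (F : SAFamily n k) :
    pseudoEnt F (k - 1) ≤ 1 + n * 2 := by
  unfold pseudoEnt
  refine (Finset.inf'_le _ (b := ∅) (by simp)).trans ?_
  have hm : ∀ y, F.μ ∅ y = 1 := by
    intro y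
    have := F.sum_one ∅ (by simp)
    rw [Fintype.sum_unique] at this
    rw [Subsingleton.elim y default]
    exact this
  refine add_le_add ?_ ?_
  · refine (ent_le_card _ (F.nonneg _ (by simp))).trans ?_
    simp
  · refine (Finset.sum_le_sum (g := fun _ => (2 : ℝ)) fun i _ => ?_).trans (by simp)
    unfold condEnt
    rw [Fintype.sum_unique, hm, one_mul]
    refine (ent_le_card _ (fun a => ?_)).trans ?_
    · simp only [div_one]
      exact F.nonneg _ (by simp; omega) _
    · rw [Fintype.card_coe]
      exact_mod_cast Finset.card_le_two


/-- The level-`k` Sherali–Adams relaxation (energy plus augmented mean-field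
pseudo-entropy at level `k-1`) upper-bounds `log Z`; moreover every probability
distribution on `{-1,1}^n` induces an SA(k)-consistent family via its marginals. -/
theorem logZ_le_SA_relaxation (n k : ℕ) (hn : 1 ≤ n) (hk : 2 ≤ k)
    (J : Fin n → Fin n → ℝ) (Z : ℝ)
    (hZ : Z = ∑ x : Cube n,
      Real.exp (∑ i : Fin n, ∑ j : Fin n, J i j * (x i : ℝ) * (x j : ℝ))) :
    Real.log Z ≤ sSup {v : ℝ | ∃ F : SAFamily n k,
        v = (∑ i : Fin n, ∑ j : Fin n, J i j * pairExp F i j) + pseudoEnt F (k - 1)} ∧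
      ∀ μ : Cube n → ℝ, (∀ x, 0 ≤ μ x) → (∑ x : Cube n, μ x = 1) →
        ∃ F : SAFamily n k, ∀ S : Finset (Fin n), S.card ≤ k → ∀ y : Asg S,
          F.μ S y = margS μ S y := by
  refine ⟨?_, fun μ h0 h1 => ⟨margFam k μ h0 h1, fun S _ y => rfl⟩⟩
  set E : Cube n → ℝ := fun x => ∑ i : Fin n, ∑ j : Fin n, J i j * (x i : ℝ) * (x j : ℝ) with hE
  haveI : Nonempty ↥B := ⟨⟨1, by simp⟩⟩
  have hZ' : Z = ∑ x, Real.exp (E x) := hZ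
  have hZpos : 0 < Z := by
    rw [hZ']
    exact Finset.sum_pos (fun x _ => Real.exp_pos _) Finset.univ_nonempty
  let p : Cube n → ℝ := fun x => Real.exp (E x) / Z
  have hp : ∀ x, 0 < p x := fun x => div_pos (Real.exp_pos _) hZpos
  have h1 : ∑ x, p x = 1 := by
    simp only [p]
    rw [← Finset.sum_div, ← hZ', div_self hZpos.ne']
  have hent : ent p = Real.log Z - ∑ x, p x * E x := by
    have : ∀ x, p x * Real.log (p x) = p x * E x - p x * Real.log Z := by
      intro x
      have : Real.log (p x) = E x - Real.log Z := by
        simp only [p]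
        rw [Real.log_div (Real.exp_pos _).ne' hZpos.ne', Real.log_exp]
      rw [this, mul_sub]
    unfold ent
    simp_rw [this]
    rw [Finset.sum_sub_distrib, ← Finset.sum_mul, h1]
    ring
  have hen : ∑ i : Fin n, ∑ j : Fin n, J i j * pairExp (margFam k p (fun x => (hp x).le) h1) i j
      = ∑ x, p x * E x := by
    simp_rw [pairExp_margFam, hE, Finset.mul_sum]
    rw [Finset.sum_comm' (t' := Finset.univ) (s' := fun _ => Finset.univ) (by simp)]
    rw [Finset.sum_comm]
    symm
    rw [Finset.sum_comm]
    refine Finset.sum_congr rfl fun i _ => ?_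
    rw [Finset.sum_comm]
    refine Finset.sum_congr rfl fun j _ => Finset.sum_congr rfl fun x _ => ?_
    ring
  have hle : ent p ≤ pseudoEnt (margFam k p (fun x => (hp x).le) h1) (k - 1) := by
    unfold pseudoEnt
    exact Finset.le_inf' _ _ fun S _ => ent_le_pseudo p hp h1 S
  refine le_csSup_of_le ?_ ⟨margFam k p (fun x => (hp x).le) h1, rfl⟩ (by rw [hen]; linarith)
  refine ⟨(∑ i, ∑ j, |J i j|) + (1 + n * 2), ?_⟩
  rintro v ⟨F, rfl⟩
  refine add_le_add (Finset.sum_le_sum fun i _ => Finset.sum_le_sum fun j _ => ?_)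
    (pseudoEnt_le hk F)
  refine (le_abs_self _).trans ?_
  rw [abs_mul]
  exact mul_le_of_le_one_right (abs_nonneg _) (abs_pairExp_le hk F i j)
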